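/- Let C be a nonempty convex subset of ℝⁿ, f : ℝⁿ × ℝⁿ → ℝ, and x̄ ∈ C with f(x̄, x̄) = 0. Assume the function y ↦ f(x̄, y) is strongly quasiconvex on C with modulus γ > 0, and that x̄ is a ρ̄-quasi-solution for some ρ̄ > 0, i.e., f(x̄, y) + (1/(2ρ̄))‖y − x̄‖² ≥ 0 for all y ∈ C. Then x̄ is a solution of the equilibrium problem: f(x̄, y) ≥ 0 for all y ∈ C. -/

import Mathlib

open Filter Topology

/-- `φ` is strongly quasiconvex on `C` with modulus `γ > 0`. -/
def StronglyQuasiconvexOn {n : ℕ} (C : Set (EuclideanSpace ℝ (Fin n))) (γ : ℝ)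
    (φ : EuclideanSpace ℝ (Fin n) → ℝ) : Prop :=
  ∀ u ∈ C, ∀ v ∈ C, ∀ l : ℝ, l ∈ Set.Icc (0 : ℝ) 1 →
    φ (l • u + (1 - l) • v) ≤ max (φ u) (φ v) - l * (1 - l) * (γ / 2) * ‖u - v‖ ^ 2

theorem quasi_solution_is_solution_of_strongly_quasiconvex {n : ℕ}
    (C : Set (EuclideanSpace ℝ (Fin n)))
    (hCne : C.Nonempty) (hCcv : Convex ℝ C)
    (f : EuclideanSpace ℝ (Fin n) → EuclideanSpace ℝ (Fin n) → ℝ)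
    (xbar : EuclideanSpace ℝ (Fin n)) (hxbar : xbar ∈ C)
    (hdiag : f xbar xbar = 0)
    (γ : ℝ) (hγ : 0 < γ)
    (hsq : StronglyQuasiconvexOn C γ (f xbar))
    (ρbar : ℝ) (hρbar : 0 < ρbar)
    (hquasi : ∀ y ∈ C, 0 ≤ f xbar y + (1 / (2 * ρbar)) * ‖y - xbar‖ ^ 2) :
    ∀ y ∈ C, 0 ≤ f xbar y := by
  intro y hy
  by_contra! hneg
  have hne : y - xbar ≠ 0 := by
    intro h
    rw [sub_eq_zero.mp h, hdiag] at hneg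
    exact lt_irrefl _ hneg
  have hD : 0 < ‖y - xbar‖ ^ 2 := pow_pos (norm_pos_iff.mpr hne) 2
  have ht : 0 < γ * ρbar := mul_pos hγ hρbar
  obtain ⟨l, hl0, hl1, hl⟩ : ∃ l : ℝ, 0 < l ∧ l < 1 ∧ l < (1 - l) * (γ * ρbar) := by
    refine ⟨γ * ρbar / (2 + 2 * (γ * ρbar)), by positivity, ?_, ?_⟩
    · rw [div_lt_one (by positivity)]
      linarith
    · rw [one_sub_div (by positivity), div_mul_eq_mul_div]
      refine div_lt_div_of_pos_right ?_ (by positivity)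
      nlinarith
  have hupper := hsq y hy xbar hxbar l ⟨hl0.le, hl1.le⟩
  have hlower := hquasi (l • y + (1 - l) • xbar)
    (hCcv hy hxbar hl0.le (sub_nonneg.mpr hl1.le) (by ring))
  have hz : l • y + (1 - l) • xbar - xbar = l • (y - xbar) := by module
  rw [hz, norm_smul, mul_pow, Real.norm_eq_abs, sq_abs] at hlower
  rw [hdiag, max_eq_right hneg.le] at hupper
  have hlt : 1 / (2 * ρbar) * (l ^ 2 * ‖y - xbar‖ ^ 2)
      < l * (1 - l) * (γ / 2) * ‖y - xbar‖ ^ 2 := by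
    have hfactor : l * (1 - l) * (γ / 2) * ‖y - xbar‖ ^ 2
        - 1 / (2 * ρbar) * (l ^ 2 * ‖y - xbar‖ ^ 2)
        = l * ‖y - xbar‖ ^ 2 / (2 * ρbar) * ((1 - l) * (γ * ρbar) - l) := by
      field_simp
    have hpos : 0 < l * ‖y - xbar‖ ^ 2 / (2 * ρbar) * ((1 - l) * (γ * ρbar) - l) :=
      mul_pos (by positivity) (sub_pos.mpr hl)
    linarith
  linarith
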